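/- The reduced Burau representation of B3 with coefficients in Z_p is faithful for every p ≥ 2: if β ∈ B3 satisfies ρ3⊗Z_p(β) = Id, then β is the trivial braid. -/

import Mathlib

open LaurentPolynomial FreeGroup

/-- The defining relation of the braid group `B₃`: `σ₁σ₂σ₁ = σ₂σ₁σ₂`. -/
def B3rels : Set (FreeGroup (Fin 2)) :=
  {of 0 * of 1 * of 0 * (of 1 * of 0 * of 1)⁻¹}

/-- The braid group on three strands, `B₃ = ⟨σ₁, σ₂ ∣ σ₁σ₂σ₁ = σ₂σ₁σ₂⟩`. -/
abbrev B3 := PresentedGroup B3rels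

/-- The generator `σ₁` of `B₃`. -/
def σ₁ : B3 := PresentedGroup.of 0

/-- The generator `σ₂` of `B₃`. -/
def σ₂ : B3 := PresentedGroup.of 1

/-!
Every 3-braid is conjugate to `Δ ^ m * w`, with `Δ = σ₁σ₂σ₁` and `w` a positive word in `σ₁⁻¹` and
`σ₂`: conjugation by `Δ` swaps the generators, and `σ₁σ₂ = Δσ₁⁻¹`, `σ₂⁻¹σ₁⁻¹ = Δ⁻¹σ₂` move every
letter of the wrong sign into the power of `Δ`.

Up to units, `σ₁⁻¹` and `σ₂` have polynomial Burau matrices congruent to `[[1, 0], [c, 0]]` modulo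
`t`. Such matrices satisfy `A * B = A`, so the matrix of a nonempty word `w` has the same shape: it
is not scalar, and its upper left entry is nonzero. As `Δ ^ 2` acts by the scalar `t ^ 3` and `Δ` is
antidiagonal, the first fact excludes the kernel elements `Δ ^ m * w` with `m` even and `w`
nonempty, the second those with `m` odd.
-/

/-- The braid relation between `x` and `y`, satisfied by the standard generators of `B₃`. -/
def BraidRel {G : Type*} [Mul G] (x y : G) : Prop :=
  x * y * x = y * x * y

/-- Garside's half twist `Δ` on the generators `x`, `y`; it is symmetric in `x` and `y` once they
satisfy the braid relation. -/
def halfTwist {G : Type*} [Mul G] (x y : G) : G :=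
  x * y * x

/-- The positive words in `x⁻¹` and `y`, that is, the alternating braids when `x`, `y` are the
standard generators of `B₃`. -/
def alternatingMonoid {G : Type*} [Group G] (x y : G) : Submonoid G :=
  Submonoid.closure {x⁻¹, y}

/-- The elements `Δ ^ m * w * Δ ^ n` with `w` alternating. For generators of a group satisfying the
braid relation this is the whole group; allowing a power of `Δ` on both sides is what makes the set
stable under multiplication by each generator. -/
def twistedAlternating {G : Type*} [Group G] (x y : G) : Set G :=
  {g | ∃ m n : ℤ, ∃ w ∈ alternatingMonoid x y, g = halfTwist x y ^ m * w * halfTwist x y ^ n}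

namespace BraidRel

variable {S : Type*} [Semigroup S] {x y : S}

lemma semiconjBy_halfTwist (h : BraidRel x y) : SemiconjBy (halfTwist x y) x y :=
  calc x * y * x * x = y * x * y * x := by rw [h]
    _ = y * (x * y * x) := by simp only [mul_assoc]

lemma semiconjBy_halfTwist_swap (h : BraidRel x y) : SemiconjBy (halfTwist x y) y x :=
  calc x * y * x * y = x * (y * x * y) := by simp only [mul_assoc]
    _ = x * (x * y * x) := by rw [h]

end BraidRel

section TwistedAlternating

variable {G : Type*} [Group G] {x y w g : G}

lemma inv_left_mem_alternatingMonoid : x⁻¹ ∈ alternatingMonoid x y :=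
  Submonoid.subset_closure (by simp)

lemma right_mem_alternatingMonoid : y ∈ alternatingMonoid x y :=
  Submonoid.subset_closure (by simp)

lemma mem_twistedAlternating_of_mem_alternatingMonoid (hw : w ∈ alternatingMonoid x y) :
    w ∈ twistedAlternating x y :=
  ⟨0, 0, w, hw, by simp⟩

lemma halfTwist_zpow_mul_mul_mem_twistedAlternating (m n : ℤ) (hg : g ∈ twistedAlternating x y) :
    halfTwist x y ^ m * g * halfTwist x y ^ n ∈ twistedAlternating x y := by
  obtain ⟨m', n', w, hw, rfl⟩ := hg
  exact ⟨m + m', n' + n, w, hw, by simp only [zpow_add, mul_assoc]⟩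

lemma exists_isConj_halfTwist_zpow_mul (hg : g ∈ twistedAlternating x y) :
    ∃ m : ℤ, ∃ w ∈ alternatingMonoid x y, IsConj g (halfTwist x y ^ m * w) := by
  obtain ⟨m, n, w, hw, rfl⟩ := hg
  refine ⟨n + m, w, hw, isConj_iff.2 ⟨halfTwist x y ^ n, ?_⟩⟩
  simp only [zpow_add, mul_assoc, mul_inv_cancel, mul_one]

namespace BraidRel

lemma exists_semiconjBy_halfTwist_zpow (h : BraidRel x y) (m : ℤ) {s : G}
    (hs : s ∈ ({x, y} : Set G)) : ∃ s' ∈ ({x, y} : Set G), SemiconjBy (halfTwist x y ^ m) s' s := by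
  have hx := h.semiconjBy_halfTwist
  have hy := h.semiconjBy_halfTwist_swap
  induction m generalizing s with
  | zero => exact ⟨s, hs, by simp⟩
  | succ m ih =>
    obtain ⟨s', rfl | rfl, hs'⟩ := ih hs
    · exact ⟨y, by simp, zpow_add_one (halfTwist s' y) m ▸ hs'.mul_left hy⟩
    · exact ⟨x, by simp, zpow_add_one (halfTwist x s') m ▸ hs'.mul_left hx⟩
  | pred m ih =>
    obtain ⟨s', rfl | rfl, hs'⟩ := ih hs
    · exact ⟨y, by simp, zpow_sub_one (halfTwist s' y) (-m) ▸ hs'.mul_left hx.inv_symm_left⟩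
    · exact ⟨x, by simp, zpow_sub_one (halfTwist x s') (-m) ▸ hs'.mul_left hy.inv_symm_left⟩

lemma left_mul_mem_twistedAlternating (h : BraidRel x y) (hw : w ∈ alternatingMonoid x y) :
    x * w ∈ twistedAlternating x y := by
  induction hw using Submonoid.closure_induction_left with
  | one =>
    refine ⟨1, -1, y, right_mem_alternatingMonoid, ?_⟩
    rw [zpow_one, zpow_neg_one, mul_one, eq_mul_inv_iff_mul_eq]
    exact h.semiconjBy_halfTwist_swap.eq.symm
  | mul_left s hs w hw _ =>
    obtain rfl | rfl := hs
    · rw [mul_inv_cancel_left]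
      exact mem_twistedAlternating_of_mem_alternatingMonoid hw
    · refine ⟨1, 0, x⁻¹ * w, mul_mem inv_left_mem_alternatingMonoid hw, ?_⟩
      simp only [halfTwist, zpow_one, zpow_zero, mul_one, mul_assoc, mul_inv_cancel_left]

lemma inv_right_mul_mem_twistedAlternating (h : BraidRel x y) (hw : w ∈ alternatingMonoid x y) :
    y⁻¹ * w ∈ twistedAlternating x y := by
  induction hw using Submonoid.closure_induction_left with
  | one =>
    refine ⟨1, -1, x⁻¹, inv_left_mem_alternatingMonoid, ?_⟩
    rw [zpow_one, zpow_neg_one, mul_one, eq_mul_inv_iff_mul_eq]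
    exact h.semiconjBy_halfTwist.inv_right.eq.symm
  | mul_left s hs w hw _ =>
    obtain rfl | rfl := hs
    · refine ⟨-1, 0, y * w, mul_mem right_mem_alternatingMonoid hw, ?_⟩
      rw [zpow_neg_one, zpow_zero, mul_one, eq_inv_mul_iff_mul_eq, halfTwist, h]
      group
    · rw [inv_mul_cancel_left]
      exact mem_twistedAlternating_of_mem_alternatingMonoid hw

lemma mul_mem_twistedAlternating (h : BraidRel x y) {s : G} (hs : s ∈ ({x, y} : Set G))
    (hg : g ∈ twistedAlternating x y) : s * g ∈ twistedAlternating x y := by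
  obtain ⟨m, n, w, hw, rfl⟩ := hg
  obtain ⟨s', hs', hconj⟩ := h.exists_semiconjBy_halfTwist_zpow m hs
  have hs'w : s' * w ∈ twistedAlternating x y := by
    obtain rfl | rfl := hs'
    · exact h.left_mul_mem_twistedAlternating hw
    · exact mem_twistedAlternating_of_mem_alternatingMonoid (mul_mem right_mem_alternatingMonoid hw)
  simpa only [← mul_assoc, hconj.eq] using
    halfTwist_zpow_mul_mul_mem_twistedAlternating m n hs'w

lemma inv_mul_mem_twistedAlternating (h : BraidRel x y) {s : G} (hs : s ∈ ({x, y} : Set G))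
    (hg : g ∈ twistedAlternating x y) : s⁻¹ * g ∈ twistedAlternating x y := by
  obtain ⟨m, n, w, hw, rfl⟩ := hg
  obtain ⟨s', hs', hconj⟩ := h.exists_semiconjBy_halfTwist_zpow m hs
  have hs'w : s'⁻¹ * w ∈ twistedAlternating x y := by
    obtain rfl | rfl := hs'
    · exact mem_twistedAlternating_of_mem_alternatingMonoid
        (mul_mem inv_left_mem_alternatingMonoid hw)
    · exact h.inv_right_mul_mem_twistedAlternating hw
  simpa only [← mul_assoc, hconj.inv_right.eq] using
    halfTwist_zpow_mul_mul_mem_twistedAlternating m n hs'w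

theorem mem_twistedAlternating_of_mem_closure (h : BraidRel x y)
    (hg : g ∈ Subgroup.closure {x, y}) : g ∈ twistedAlternating x y := by
  induction hg using Subgroup.closure_induction_left with
  | one => exact mem_twistedAlternating_of_mem_alternatingMonoid (one_mem _)
  | mul_left s hs g _ ih => exact h.mul_mem_twistedAlternating hs ih
  | inv_mul_cancel s hs g _ ih => exact h.inv_mul_mem_twistedAlternating hs ih

end BraidRel

end TwistedAlternating

lemma braidRel_σ₁_σ₂ : BraidRel σ₁ σ₂ := by
  have h := PresentedGroup.one_of_mem (rels := B3rels) rfl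
  rwa [_root_.map_mul, _root_.map_inv, mul_inv_eq_one] at h

lemma closure_σ₁_σ₂ : Subgroup.closure {σ₁, σ₂} = ⊤ := by
  rw [← PresentedGroup.closure_range_of B3rels, ← Matrix.range_cons_cons_empty σ₁ σ₂ ![]]
  congr 2
  ext i
  fin_cases i <;> rfl

/-- `M` is, up to a unit, a matrix of polynomials in `t` whose reduction modulo `t` is `A`.
The unit is not fixed, so `A` is not determined by `M`. -/
def HasReduction {n R : Type*} [CommSemiring R] (M : Matrix n n R[T;T⁻¹]) (A : Matrix n n R) :
    Prop :=
  ∃ (u : R[T;T⁻¹]ˣ) (N : Matrix n n (Polynomial R)),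
    M = u • N.map Polynomial.toLaurent ∧ N.map Polynomial.constantCoeff = A

namespace HasReduction

variable {n R : Type*} [CommSemiring R] {M M' : Matrix n n R[T;T⁻¹]} {A A' : Matrix n n R}

lemma mul [Fintype n] (hM : HasReduction M A) (hM' : HasReduction M' A') :
    HasReduction (M * M') (A * A') := by
  obtain ⟨u, N, rfl, rfl⟩ := hM
  obtain ⟨u', N', rfl, rfl⟩ := hM'
  exact ⟨u * u', N * N', by rw [Matrix.map_mul, smul_mul_smul_comm], Matrix.map_mul⟩

lemma apply_eq_apply (hM : HasReduction M A) {i j k l : n} (h : M i j = M k l) :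
    A i j = A k l := by
  obtain ⟨u, N, rfl, rfl⟩ := hM
  have hN : N i j = N k l := Polynomial.toLaurent_injective ((smul_left_cancel_iff u).1 h)
  exact congrArg Polynomial.constantCoeff hN

lemma apply_ne_zero (hM : HasReduction M A) {i j : n} (h : A i j ≠ 0) : M i j ≠ 0 := by
  obtain ⟨u, N, rfl, rfl⟩ := hM
  intro h0
  have hN : N i j = 0 :=
    Polynomial.toLaurent_injective (((smul_eq_zero_iff_eq u).1 h0).trans (map_zero _).symm)
  exact h (by rw [Matrix.map_apply, hN, map_zero])

end HasReduction

/-- `ρ` takes the values of the reduced Burau representation on the generators of `B₃`, the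
Laurent polynomial variable playing the role of `t`. -/
structure IsReducedBurau {R : Type*} [CommRing R]
    (ρ : B3 →* Matrix (Fin 2) (Fin 2) R[T;T⁻¹]) : Prop where
  map_σ₁ : ρ σ₁ = !![-T 1, 0; 1, 1]
  map_σ₂ : ρ σ₂ = !![1, T 1; 0, -T 1]

lemma map_zpow_eq_T_smul_one {G n R : Type*} [Group G] [Fintype n] [DecidableEq n]
    [CommSemiring R] (ρ : G →* Matrix n n R[T;T⁻¹]) {g : G} {a : ℤ}
    (hg : ρ g = (T a : R[T;T⁻¹]) • 1) (k : ℤ) :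
    ρ (g ^ k) = (T (a * k) : R[T;T⁻¹]) • 1 := by
  have hg_inv : ρ g⁻¹ = (T (-a) : R[T;T⁻¹]) • 1 := by
    refine left_inv_eq_right_inv (map_mul_eq_one ρ (inv_mul_cancel g)) ?_
    rw [hg, smul_mul_smul_comm, ← T_add, add_neg_cancel, T_zero, one_smul, one_mul]
  induction k with
  | zero => simp
  | succ k ih =>
    rw [zpow_add_one, _root_.map_mul, ih, hg, smul_mul_smul_comm, ← T_add, mul_one, mul_add_one]
  | pred k ih =>
    rw [zpow_sub_one, _root_.map_mul, ih, hg_inv, smul_mul_smul_comm, ← T_add, mul_one, mul_sub_one,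
      sub_eq_add_neg]

namespace IsReducedBurau

variable {R : Type*} [CommRing R] {ρ : B3 →* Matrix (Fin 2) (Fin 2) R[T;T⁻¹]} {w : B3}

lemma map_halfTwist (hρ : IsReducedBurau ρ) : ρ (halfTwist σ₁ σ₂) = !![0, -T 1 ^ 2; -T 1, 0] := by
  -- As a simp lemma `T_mul` loops on `T 1 * T 1`.
  simp [halfTwist, hρ.map_σ₁, hρ.map_σ₂, pow_two, -T_mul]

lemma map_halfTwist_zpow_two_mul (hρ : IsReducedBurau ρ) (k : ℤ) :
    ρ (halfTwist σ₁ σ₂ ^ (2 * k)) = (T (3 * k) : R[T;T⁻¹]) • 1 := by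
  rw [zpow_mul]
  refine map_zpow_eq_T_smul_one ρ ?_ k
  have hT : (T 3 : R[T;T⁻¹]) = T 1 ^ 3 := by rw [T_pow]; rfl
  rw [zpow_two, _root_.map_mul, hρ.map_halfTwist, hT]
  simp [Matrix.one_fin_two, pow_succ, mul_assoc, -T_mul, -mul_T_assoc]

lemma map_inv_σ₁ (hρ : IsReducedBurau ρ) : ρ σ₁⁻¹ = !![-T (-1), 0; T (-1), 1] := by
  have hT : (T 1 * T (-1) : R[T;T⁻¹]) = 1 := by rw [← T_add, add_neg_cancel, T_zero]
  refine left_inv_eq_right_inv (map_mul_eq_one ρ (inv_mul_cancel σ₁)) ?_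
  simp [hρ.map_σ₁, Matrix.one_fin_two, hT]

lemma hasReduction_inv_σ₁ (hρ : IsReducedBurau ρ) :
    HasReduction (ρ σ₁⁻¹) !![1, 0; -1, 0] := by
  have hT : (T (-1) * T 1 : R[T;T⁻¹]) = 1 := by rw [← T_add, neg_add_cancel, T_zero]
  refine ⟨⟨-T (-1), -T 1, by rw [neg_mul_neg, hT], by rw [neg_mul_neg, mul_comm, hT]⟩,
    !![1, 0; -1, -.X], ?_, ?_⟩
  · ext i j : 1
    fin_cases i <;> fin_cases j <;> simp [hρ.map_inv_σ₁, Units.smul_def, hT]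
  · ext i j : 1
    fin_cases i <;> fin_cases j <;> simp

lemma hasReduction_σ₂ (hρ : IsReducedBurau ρ) : HasReduction (ρ σ₂) !![1, 0; 0, 0] := by
  refine ⟨1, !![1, .X; 0, -.X], ?_, ?_⟩ <;> ext i j : 1
  · fin_cases i <;> fin_cases j <;> simp [hρ.map_σ₂]
  · fin_cases i <;> fin_cases j <;> simp

lemma eq_one_or_hasReduction (hρ : IsReducedBurau ρ) (hw : w ∈ alternatingMonoid σ₁ σ₂) :
    w = 1 ∨ ∃ c, HasReduction (ρ w) !![1, 0; c, 0] := by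
  induction hw using Submonoid.closure_induction with
  | mem s hs =>
    obtain rfl | rfl := hs
    exacts [.inr ⟨-1, hρ.hasReduction_inv_σ₁⟩, .inr ⟨0, hρ.hasReduction_σ₂⟩]
  | one => exact .inl rfl
  | mul v w _ _ hv hw =>
    obtain rfl | ⟨c, hc⟩ := hv
    · rwa [one_mul]
    obtain rfl | ⟨d, hd⟩ := hw
    · exact .inr ⟨c, by rwa [mul_one]⟩
    · exact .inr ⟨c, by simpa using hc.mul hd⟩

variable [Nontrivial R]

lemma apply_zero_zero_ne_zero (hρ : IsReducedBurau ρ) (hw : w ∈ alternatingMonoid σ₁ σ₂) :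
    ρ w 0 0 ≠ 0 := by
  obtain rfl | ⟨c, hc⟩ := hρ.eq_one_or_hasReduction hw
  · simp
  · exact hc.apply_ne_zero one_ne_zero

lemma eq_one_of_apply_zero_zero_eq (hρ : IsReducedBurau ρ) (hw : w ∈ alternatingMonoid σ₁ σ₂)
    (h : ρ w 0 0 = ρ w 1 1) : w = 1 :=
  (hρ.eq_one_or_hasReduction hw).resolve_right fun ⟨_, hc⟩ =>
    one_ne_zero (hc.apply_eq_apply h)

lemma halfTwist_zpow_two_mul_mul_eq_one (hρ : IsReducedBurau ρ)
    (hw : w ∈ alternatingMonoid σ₁ σ₂) {k : ℤ} (h : ρ (halfTwist σ₁ σ₂ ^ (2 * k) * w) = 1) :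
    halfTwist σ₁ σ₂ ^ (2 * k) * w = 1 := by
  rw [_root_.map_mul, hρ.map_halfTwist_zpow_two_mul, smul_one_mul] at h
  have hdiag (i : Fin 2) : T (3 * k) * ρ w i i = 1 := by
    simpa using congrFun (congrFun h i) i
  obtain rfl : w = 1 := hρ.eq_one_of_apply_zero_zero_eq hw
    ((isUnit_T (3 * k)).mul_left_cancel ((hdiag 0).trans (hdiag 1).symm))
  have hT : (T (3 * k) : R[T;T⁻¹]) = T 0 := by simpa using hdiag 0
  have hk : 3 * k = 0 := AddMonoidAlgebra.single_left_injective one_ne_zero hT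
  obtain rfl : k = 0 := by omega
  simp

lemma map_halfTwist_zpow_two_mul_add_one_mul_ne_one (hρ : IsReducedBurau ρ)
    (hw : w ∈ alternatingMonoid σ₁ σ₂) (k : ℤ) :
    ρ (halfTwist σ₁ σ₂ ^ (2 * k + 1) * w) ≠ 1 := by
  intro h
  rw [zpow_add_one, mul_assoc, _root_.map_mul, hρ.map_halfTwist_zpow_two_mul, smul_one_mul,
    _root_.map_mul, hρ.map_halfTwist] at h
  have h10 : T (3 * k) * (T 1 * ρ w 0 0) = 0 := by
    simpa [Matrix.vecMul, dotProduct, Fin.sum_univ_two, -T_mul] using congrFun (congrFun h 1) 0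
  rw [(isUnit_T _).mul_right_eq_zero, (isUnit_T _).mul_right_eq_zero] at h10
  exact hρ.apply_zero_zero_ne_zero hw h10

end IsReducedBurau

theorem burau3_mod_p_faithful_general {R : Type*} [CommRing R] [Nontrivial R]
    (ρ : B3 →* Matrix (Fin 2) (Fin 2) R[T;T⁻¹])
    (h1 : ρ σ₁ = !![-T 1, 0; 1, 1])
    (h2 : ρ σ₂ = !![1, T 1; 0, -T 1]) :
    ∀ β : B3, ρ β = 1 → β = 1 := by
  intro β hβ
  have hρ : IsReducedBurau ρ := ⟨h1, h2⟩
  have hβ_mem : β ∈ twistedAlternating σ₁ σ₂ :=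
    braidRel_σ₁_σ₂.mem_twistedAlternating_of_mem_closure (closure_σ₁_σ₂ ▸ Subgroup.mem_top β)
  obtain ⟨m, w, hw, hconj⟩ := exists_isConj_halfTwist_zpow_mul hβ_mem
  have hker : ρ (halfTwist σ₁ σ₂ ^ m * w) = 1 := isConj_one_right.1 (hβ ▸ ρ.map_isConj hconj)
  suffices halfTwist σ₁ σ₂ ^ m * w = 1 from isConj_one_right.1 (this ▸ hconj).symm
  obtain ⟨k, rfl | rfl⟩ := m.even_or_odd'
  · exact hρ.halfTwist_zpow_two_mul_mul_eq_one hw hker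
  · exact absurd hker (hρ.map_halfTwist_zpow_two_mul_add_one_mul_ne_one hw k)

/-- The reduced Burau representation of `B₃` with coefficients in `Z_p` is
faithful for every `p ≥ 2`: any homomorphism `ρ` with
`ρ(σ₁) = [[-t,0],[1,1]]` and `ρ(σ₂) = [[1,t],[0,-t]]` has trivial kernel. -/
theorem burau3_mod_p_faithful (p : ℕ) (hp : 2 ≤ p)
    (ρ : B3 →* Matrix (Fin 2) (Fin 2) (LaurentPolynomial (ZMod p)))
    (h1 : ρ σ₁ = !![-T 1, 0; 1, 1])
    (h2 : ρ σ₂ = !![1, T 1; 0, -T 1]) :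
    ∀ β : B3, ρ β = 1 → β = 1 := by
  have : Fact (1 < p) := ⟨hp⟩
  exact burau3_mod_p_faithful_general ρ h1 h2
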